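/- arXiv:2410.06148 — 2 statements merged into one kernel-verified Lean document; each statement's English description precedes it below -/
import Mathlib

section
/- Let n ≥ 32 be an integer, let c : E(K_n) → {−1, +1} be a balanced colouring of the edges of K_n, and let F be a forest on n vertices with maximum degree Δ ≤ n/2. Let ε be a real number with 1/n ≤ ε ≤ 1/8. Then there exists a copy F' of F in K_n such that |c(F')| ≤ max( 1 + 2/ε , 2 + max(Δ − (1/4 − 2ε)n, 0) ). -/
/-!
Relocating one vertex of a copy `f(F)` changes few summands of `c(f(F))`, and `c(f(F))` averages to
`0` over all permutations `f`; so the aim is to find two copies of opposite signs that differ by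
swapping a leaf `l` with a vertex `v` of small effect.

Assume no copy has weight `0` and take a minimal set `P` of vertices, avoiding `l`, whose images
already decide the sign of the weight. For `v ∈ P`, minimality provides images of `P \ {v}` for
which the possible images of `v` split into a positive set `X` and a negative set `Y`, both
nonempty; sending `v` into `X` and `l` into `Y` and then swapping them changes the sign. The swap
costs at most `2 deg v + 2`, which settles the case of a vertex of degree at most `2 / ε` in `P`.

Otherwise `P` has fewer than `ε n` elements, since a forest has fewer than `n` edges, and for the
same reason some `v ∈ P` has at most one neighbour in `P`. As the colouring is balanced, `x ∈ X` and
`y ∈ Y` can be chosen such that about `n / 4` vertices `s` satisfy `c(xs) ≤ c(ys)`. Placing the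
neighbours of `v` outside `P` on these vertices first makes the swap cheap.
-/

open Finset Equiv

variable {V : Type*}

section Forest

variable [Fintype V] {F : SimpleGraph V} [DecidableRel F.Adj]

theorem card_edgeFinset_lt_card_of_isAcyclic [Nonempty V] (hF : F.IsAcyclic) :
    #F.edgeFinset < Fintype.card V := by
  classical
  obtain ⟨T, hFT, -, hT⟩ :=
    (SimpleGraph.connected_top (V := V)).exists_isTree_le_of_le_of_isAcyclic le_top hF
  rw [← hT.card_edgeFinset, Nat.lt_add_one_iff]
  exact card_le_card (SimpleGraph.edgeFinset_mono hFT)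

theorem sum_degree_lt_two_mul_card_of_isAcyclic [Nonempty V] (hF : F.IsAcyclic) :
    ∑ v, F.degree v < 2 * Fintype.card V := by
  have := card_edgeFinset_lt_card_of_isAcyclic hF
  rw [F.sum_degrees_eq_twice_card_edges]
  omega

theorem exists_degree_le_one_of_isAcyclic [Nonempty V] (hF : F.IsAcyclic) :
    ∃ v, F.degree v ≤ 1 := by
  by_contra! h
  have hsum : Fintype.card V * 2 ≤ ∑ v, F.degree v :=
    card_nsmul_le_sum univ _ 2 fun v _ => h v
  have := sum_degree_lt_two_mul_card_of_isAcyclic hF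
  omega

theorem exists_card_neighborFinset_inter_le_one_of_isAcyclic [DecidableEq V]
    (hF : F.IsAcyclic) {P : Finset V} (hP : P.Nonempty) :
    ∃ v ∈ P, #(F.neighborFinset v ∩ P) ≤ 1 := by
  have : Nonempty (P : Set V) := hP.to_subtype
  obtain ⟨v, hv⟩ := exists_degree_le_one_of_isAcyclic (hF.induce (P : Set V))
  refine ⟨v, v.2, le_trans ?_ hv⟩
  have hsub : F.neighborFinset v ∩ P ⊆
      ((F.induce (P : Set V)).neighborFinset v).image Subtype.val := by
    intro w hw
    simpa [and_comm] using hw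
  exact (card_le_card hsub).trans card_image_le

theorem card_mul_lt_two_mul_card_of_isAcyclic [Nonempty V] (hF : F.IsAcyclic) {P : Finset V}
    {t : ℝ} (ht : ∀ v ∈ P, t ≤ F.degree v) : #P * t < 2 * Fintype.card V := by
  calc #P * t ≤ ∑ v ∈ P, (F.degree v : ℝ) := by
        simpa using card_nsmul_le_sum P _ t ht
    _ ≤ ∑ v, (F.degree v : ℝ) := sum_le_univ_sum_of_nonneg fun v => by positivity
    _ < 2 * Fintype.card V := mod_cast sum_degree_lt_two_mul_card_of_isAcyclic hF

end Forest

section EdgeCounting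

variable (G : SimpleGraph V) [DecidableRel G.Adj]

theorem card_interedges_eq_sum_left (s t : Finset V) :
    #(G.interedges s t) = ∑ x ∈ s, #{y ∈ t | G.Adj x y} := by
  simp only [SimpleGraph.interedges_def, card_filter, sum_product]

theorem card_interedges_eq_sum_right (s t : Finset V) :
    #(G.interedges s t) = ∑ y ∈ t, #{x ∈ s | G.Adj y x} := by
  simp only [SimpleGraph.interedges_def, card_filter, sum_product_right, G.adj_comm]

theorem exists_card_adj_compl_adj_le_max [DecidableEq V] {X Y : Finset V}
    (hX : X.Nonempty) (hY : Y.Nonempty) (hXY : Disjoint X Y) :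
    ∃ x ∈ X, ∃ y ∈ Y, #{s ∈ X ∪ Y | G.Adj x s ∧ Gᶜ.Adj y s} ≤ max #X #Y := by
  have hsplit (x y : V) : #{s ∈ X ∪ Y | G.Adj x s ∧ Gᶜ.Adj y s} ≤
      #{s ∈ Y | G.Adj x s} + #{s ∈ X | Gᶜ.Adj y s} := by
    refine (card_le_card fun s hs => ?_).trans (card_union_le _ _)
    simp only [mem_filter, mem_union] at hs ⊢
    tauto
  have hsum : ∑ p ∈ X ×ˢ Y, #{s ∈ X ∪ Y | G.Adj p.1 s ∧ Gᶜ.Adj p.2 s} ≤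
      ∑ _p ∈ X ×ˢ Y, max #X #Y :=
    calc ∑ p ∈ X ×ˢ Y, #{s ∈ X ∪ Y | G.Adj p.1 s ∧ Gᶜ.Adj p.2 s}
      _ ≤ ∑ p ∈ X ×ˢ Y, (#{s ∈ Y | G.Adj p.1 s} + #{s ∈ X | Gᶜ.Adj p.2 s}) :=
          sum_le_sum fun p _ => hsplit p.1 p.2
      _ = #Y * #(G.interedges X Y) + #X * #(Gᶜ.interedges X Y) := by
          rw [card_interedges_eq_sum_left, card_interedges_eq_sum_right, sum_product]
          simp only [sum_add_distrib, sum_const, smul_eq_mul, mul_sum]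
      _ ≤ max #X #Y * #(G.interedges X Y) + max #X #Y * #(Gᶜ.interedges X Y) := by
          gcongr
          · exact le_max_right _ _
          · exact le_max_left _ _
      _ = ∑ _p ∈ X ×ˢ Y, max #X #Y := by
          rw [← mul_add, G.card_interedges_add_card_interedges_compl hXY, sum_const, card_product,
            smul_eq_mul, mul_comm]
  obtain ⟨⟨x, y⟩, hxy, hle⟩ := exists_le_of_sum_le (hX.product hY) hsum
  exact ⟨x, (mem_product.1 hxy).1, y, (mem_product.1 hxy).2, hle⟩

variable [Fintype V]

theorem exists_mem_card_mul_degree_le {X : Finset V} (hX : X.Nonempty) :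
    ∃ x ∈ X, #X * G.degree x ≤ 2 * #G.edgeFinset := by
  obtain ⟨x, hx, hmin⟩ := exists_min_image X (G.degree ·) hX
  refine ⟨x, hx, ?_⟩
  calc #X * G.degree x ≤ ∑ u ∈ X, G.degree u := card_nsmul_le_sum X _ _ hmin
    _ ≤ ∑ u, G.degree u := sum_le_univ_sum_of_nonneg fun _ => Nat.zero_le _
    _ = 2 * #G.edgeFinset := G.sum_degrees_eq_twice_card_edges

theorem exists_mem_four_mul_degree_le {X : Finset V} (hX : 3 * Fintype.card V < 4 * #X)
    (hG : 32 * #G.edgeFinset ≤ 9 * Fintype.card V ^ 2) :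
    ∃ x ∈ X, 4 * G.degree x ≤ 3 * Fintype.card V := by
  obtain ⟨x, hx, hdeg⟩ := exists_mem_card_mul_degree_le G (X := X) (card_pos.1 (by omega))
  refine ⟨x, hx, ?_⟩
  by_contra! h
  nlinarith

variable [DecidableEq V]

theorem exists_four_mul_card_adj_compl_adj_le {X Y : Finset V} (hX : X.Nonempty)
    (hY : Y.Nonempty) (hXY : Disjoint X Y) (hG : 32 * #G.edgeFinset ≤ 9 * Fintype.card V ^ 2)
    (hGc : 32 * #Gᶜ.edgeFinset ≤ 9 * Fintype.card V ^ 2) :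
    ∃ x ∈ X, ∃ y ∈ Y, 4 * #{s ∈ X ∪ Y | G.Adj x s ∧ Gᶜ.Adj y s} ≤ 3 * Fintype.card V := by
  have le_left (x y : V) : #{s ∈ X ∪ Y | G.Adj x s ∧ Gᶜ.Adj y s} ≤ G.degree x :=
    card_le_card fun s hs => (G.mem_neighborFinset x s).2 (mem_filter.1 hs).2.1
  have le_right (x y : V) : #{s ∈ X ∪ Y | G.Adj x s ∧ Gᶜ.Adj y s} ≤ Gᶜ.degree y :=
    card_le_card fun s hs => (Gᶜ.mem_neighborFinset y s).2 (mem_filter.1 hs).2.2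
  by_cases hXbig : 3 * Fintype.card V < 4 * #X
  · obtain ⟨x, hx, hdeg⟩ := exists_mem_four_mul_degree_le G hXbig hG
    obtain ⟨y, hy⟩ := hY
    exact ⟨x, hx, y, hy, (Nat.mul_le_mul_left 4 (le_left x y)).trans hdeg⟩
  by_cases hYbig : 3 * Fintype.card V < 4 * #Y
  · obtain ⟨y, hy, hdeg⟩ := exists_mem_four_mul_degree_le Gᶜ hYbig hGc
    obtain ⟨x, hx⟩ := hX
    exact ⟨x, hx, y, hy, (Nat.mul_le_mul_left 4 (le_right x y)).trans hdeg⟩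
  obtain ⟨x, hx, y, hy, hle⟩ := exists_card_adj_compl_adj_le_max G hX hY hXY
  exact ⟨x, hx, y, hy, by omega⟩

theorem edgeFinset_union_edgeFinset_compl :
    G.edgeFinset ∪ Gᶜ.edgeFinset = (⊤ : SimpleGraph V).edgeFinset := by
  ext e
  induction e with | _ x y
  have := G.ne_of_adj (a := x) (b := y)
  simp only [mem_union, SimpleGraph.mem_edgeFinset, SimpleGraph.mem_edgeSet,
    SimpleGraph.compl_adj, SimpleGraph.top_adj]
  tauto

theorem disjoint_edgeFinset_edgeFinset_compl : Disjoint G.edgeFinset Gᶜ.edgeFinset :=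
  SimpleGraph.disjoint_edgeFinset.2 disjoint_compl_right

theorem card_edgeFinset_add_card_edgeFinset_compl :
    #G.edgeFinset + #Gᶜ.edgeFinset = (Fintype.card V).choose 2 := by
  rw [← card_union_of_disjoint (disjoint_edgeFinset_edgeFinset_compl G),
    edgeFinset_union_edgeFinset_compl, SimpleGraph.card_edgeFinset_top_eq_card_choose_two]

end EdgeCounting

/-- `c` is a `±1`-colouring of the edges of the complete graph on `V`; nothing is required of the
values of `c` on the diagonal of `Sym2 V`. -/
def IsSignColouring (c : Sym2 V → ℤ) : Prop :=
  ∀ ⦃x y : V⦄, x ≠ y → c s(x, y) = 1 ∨ c s(x, y) = -1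

/-- The graph of the edges of colour `1`. For a sign colouring, its complement is the graph of the
edges of colour `-1`. -/
def positiveGraph (c : Sym2 V → ℤ) : SimpleGraph V :=
  SimpleGraph.fromEdgeSet {e | c e = 1}

theorem positiveGraph_adj {c : Sym2 V → ℤ} {x y : V} :
    (positiveGraph c).Adj x y ↔ c s(x, y) = 1 ∧ x ≠ y :=
  SimpleGraph.fromEdgeSet_adj _

instance [DecidableEq V] (c : Sym2 V → ℤ) : DecidableRel (positiveGraph c).Adj :=
  fun _ _ => decidable_of_iff' _ positiveGraph_adj

namespace IsSignColouring

variable {c : Sym2 V → ℤ}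

theorem sub_le_two (hc : IsSignColouring c) {x y s : V} (hx : s ≠ x) (hy : s ≠ y) :
    c s(x, s) - c s(y, s) ≤ 2 := by
  have := hc hx.symm
  have := hc hy.symm
  omega

theorem sum_sub_le_two_mul_card (hc : IsSignColouring c) {A : Finset V} {f : Perm V} {v l : V}
    (hv : v ∉ A) (hl : l ∉ A) : ∑ w ∈ A, (c s(f v, f w) - c s(f l, f w)) ≤ 2 * #A := by
  rw [mul_comm, ← nsmul_eq_mul]
  exact sum_le_card_nsmul _ _ _ fun w hw => hc.sub_le_two
    (f.injective.ne (ne_of_mem_of_not_mem hw hv)) (f.injective.ne (ne_of_mem_of_not_mem hw hl))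

theorem compl_positiveGraph_adj (hc : IsSignColouring c) {x y : V} :
    (positiveGraph c)ᶜ.Adj x y ↔ c s(x, y) = -1 ∧ x ≠ y := by
  have := hc (x := x) (y := y)
  rw [SimpleGraph.compl_adj, positiveGraph_adj]
  grind

variable [Fintype V] [DecidableEq V]

theorem sum_eq_card_sub_card (hc : IsSignColouring c) :
    ∑ e ∈ (⊤ : SimpleGraph V).edgeFinset, c e =
      #(positiveGraph c).edgeFinset - #(positiveGraph c)ᶜ.edgeFinset := by
  have hpos : ∀ e ∈ (positiveGraph c).edgeFinset, c e = 1 := by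
    intro e he
    induction e with | _ x y
    exact (positiveGraph_adj.1 (SimpleGraph.mem_edgeFinset.1 he)).1
  have hneg : ∀ e ∈ (positiveGraph c)ᶜ.edgeFinset, c e = -1 := by
    intro e he
    induction e with | _ x y
    exact (hc.compl_positiveGraph_adj.1 (SimpleGraph.mem_edgeFinset.1 he)).1
  rw [← edgeFinset_union_edgeFinset_compl (positiveGraph c),
    sum_union (disjoint_edgeFinset_edgeFinset_compl _), sum_congr rfl hpos, sum_congr rfl hneg]
  simp [sub_eq_add_neg]

theorem four_mul_card_edgeFinset_positiveGraph (hc : IsSignColouring c)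
    (hbal : ∑ e ∈ (⊤ : SimpleGraph V).edgeFinset, c e = 0) :
    4 * #(positiveGraph c).edgeFinset = Fintype.card V * (Fintype.card V - 1) ∧
      4 * #(positiveGraph c)ᶜ.edgeFinset = Fintype.card V * (Fintype.card V - 1) := by
  have hdiff := hc.sum_eq_card_sub_card
  have hsum := card_edgeFinset_add_card_edgeFinset_compl (positiveGraph c)
  have heven := Nat.div_mul_cancel (Nat.even_mul_pred_self (Fintype.card V)).two_dvd
  rw [Nat.choose_two_right] at hsum
  omega

theorem exists_four_mul_card_filter_lt_le (hc : IsSignColouring c)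
    (hbal : ∑ e ∈ (⊤ : SimpleGraph V).edgeFinset, c e = 0) {X Y : Finset V}
    (hX : X.Nonempty) (hY : Y.Nonempty) (hXY : Disjoint X Y) :
    ∃ x ∈ X, ∃ y ∈ Y,
      4 * #{s ∈ X ∪ Y | s ≠ x ∧ s ≠ y ∧ c s(y, s) < c s(x, s)} ≤ 3 * Fintype.card V := by
  obtain ⟨hpos, hneg⟩ := hc.four_mul_card_edgeFinset_positiveGraph hbal
  have hsq : Fintype.card V * (Fintype.card V - 1) ≤ Fintype.card V ^ 2 := by
    rw [sq]
    gcongr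
    exact Nat.sub_le _ _
  obtain ⟨x, hx, y, hy, hle⟩ := exists_four_mul_card_adj_compl_adj_le (positiveGraph c) hX hY hXY
    (by omega) (by omega)
  refine ⟨x, hx, y, hy, le_trans ?_ hle⟩
  refine Nat.mul_le_mul_left 4 (card_le_card (monotone_filter_right _ fun s _ hs => ?_))
  obtain ⟨hsx, hsy, hlt⟩ := hs
  have := hc hsx.symm
  have := hc hsy.symm
  exact ⟨positiveGraph_adj.2 ⟨by omega, hsx.symm⟩,
    hc.compl_positiveGraph_adj.2 ⟨by omega, hsy.symm⟩⟩

end IsSignColouring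

theorem exists_subset_card_eq_sum_le {α : Type*} {A : Finset α} {d : α → ℤ} {M : ℤ}
    (hM : 0 ≤ M) (hd : ∀ a ∈ A, d a ≤ M) {k : ℕ} (hk : k ≤ #A) :
    ∃ S ⊆ A, #S = k ∧ ∑ a ∈ S, d a ≤ M * (k - #{a ∈ A | d a ≤ 0} : ℕ) := by
  classical
  rcases le_total k #{a ∈ A | d a ≤ 0} with hle | hle
  · obtain ⟨S, hS, hcard⟩ := exists_subset_card_eq hle
    refine ⟨S, hS.trans (filter_subset _ _), hcard, ?_⟩
    calc ∑ a ∈ S, d a ≤ 0 := sum_nonpos fun a ha => (mem_filter.1 (hS ha)).2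
      _ ≤ _ := by positivity
  · obtain ⟨S, hgood, hS, hcard⟩ := exists_subsuperset_card_eq (filter_subset _ A) hle hk
    refine ⟨S, hS, hcard, ?_⟩
    calc ∑ a ∈ S, d a
      _ = ∑ a ∈ S \ {a ∈ A | d a ≤ 0}, d a + ∑ a ∈ A with d a ≤ 0, d a :=
          (sum_sdiff hgood).symm
      _ ≤ #(S \ {a ∈ A | d a ≤ 0}) • M + 0 :=
          add_le_add (sum_le_card_nsmul _ _ _ fun a ha => hd a (hS (mem_sdiff.1 ha).1))
            (sum_nonpos fun a ha => (mem_filter.1 ha).2)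
      _ = M * (k - #{a ∈ A | d a ≤ 0} : ℕ) := by
          rw [card_sdiff_of_subset hgood, hcard, nsmul_eq_mul, add_zero, mul_comm]

section Permutations

variable [DecidableEq V]

theorem map_swap_eq_self_of_mem_iff_mem {e : Sym2 V} {v l : V} (he : v ∈ e ↔ l ∈ e) :
    e.map (swap v l) = e := by
  induction e with | _ x y
  simp only [Sym2.mem_iff, Sym2.map_mk, Sym2.eq_iff, swap_apply_def] at he ⊢
  grind

theorem sum_perm_map_eq_zero [Fintype V] {c : Sym2 V → ℤ}
    (hbal : ∑ e ∈ (⊤ : SimpleGraph V).edgeFinset, c e = 0) {e : Sym2 V} (he : ¬ e.IsDiag) :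
    ∑ f : Perm V, c (e.map f) = 0 := by
  have hindep : ∀ e' ∈ (⊤ : SimpleGraph V).edgeFinset,
      ∑ f : Perm V, c (e'.map f) = ∑ f : Perm V, c (e.map f) := by
    intro e' he'
    induction e with | _ u w
    induction e' with | _ u' w'
    obtain ⟨τ, hu, hw⟩ : ∃ τ : Perm V, τ u = u' ∧ τ w = w' :=
      MulAction.is_two_pretransitive_iff.1 (Perm.isMultiplyPretransitive V 2)
        (by simpa using he) (by simpa using he')
    rw [← Equiv.sum_comp (Equiv.mulRight τ) fun f : Perm V => c (s(u, w).map f)]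
    simp [hu, hw]
  have hperm (f : Perm V) : ∑ e' ∈ (⊤ : SimpleGraph V).edgeFinset, c (e'.map f) = 0 := by
    rw [← hbal]
    exact sum_bijective _ (Finite.injective_iff_bijective.1 (Sym2.map.injective f.injective))
      (fun e' => by simp [Sym2.isDiag_map f.injective]) fun _ _ => rfl
  have hmul : #(⊤ : SimpleGraph V).edgeFinset * ∑ f : Perm V, c (e.map f) = 0 := by
    rw [← nsmul_eq_mul, ← sum_const, ← sum_congr rfl hindep, sum_comm,
      sum_eq_zero fun f _ => hperm f]
  have hne : (⊤ : SimpleGraph V).edgeFinset.Nonempty := ⟨e, by simpa using he⟩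
  exact (mul_eq_zero.1 hmul).resolve_left (by exact_mod_cast hne.card_ne_zero)

theorem exists_perm_eqOn_image_eq (f₀ : Perm V) {P K S : Finset V}
    (hK : Disjoint K P) (hS : Disjoint S (P.image f₀)) (h : #K = #S) :
    ∃ f : Perm V, Set.EqOn f f₀ P ∧ K.image f = S := by
  obtain ⟨π, hπ⟩ : ∃ π : Perm V, K.map π.toEmbedding = S := Perm.exists_map_finset_eq K S h
  have hpiece : ∀ p ∈ P, K.piecewise π f₀ p = f₀ p := fun p hp =>
    piecewise_eq_of_notMem _ _ _ (disjoint_right.1 hK hp)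
  have hpieceK : ∀ p ∈ K, K.piecewise π f₀ p = π p := fun p hp =>
    piecewise_eq_of_mem _ _ _ hp
  have hinj : Set.InjOn (K.piecewise π f₀) (K ∪ P) := by
    refine (Set.injOn_union (disjoint_coe.2 hK)).2
      ⟨π.injective.injOn.congr ?_, f₀.injective.injOn.congr ?_, ?_⟩
    · exact fun p hp => (hpieceK p hp).symm
    · exact fun p hp => (hpiece p hp).symm
    · intro p hp q hq h
      rw [hpieceK p hp, hpiece q hq] at h
      refine disjoint_left.1 hS (?_ : π p ∈ S) (h ▸ mem_image_of_mem f₀ hq)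
      rw [← hπ]
      exact mem_map_of_mem _ hp
  obtain ⟨f, hf⟩ := Perm.exists_extending_pair _ _ Subtype.val_injective hinj.injective
  refine ⟨f, fun p hp => ?_, ?_⟩
  · exact (hf ⟨p, .inr hp⟩).trans (hpiece p hp)
  · rw [← hπ, map_eq_image]
    exact image_congr fun p hp => (hf ⟨p, .inl hp⟩).trans (hpieceK p hp)

theorem exists_perm_eqOn_apply_eq (f₀ : Perm V) {P : Finset V} {v x : V} (hv : v ∉ P)
    (hx : x ∉ P.image f₀) : ∃ f : Perm V, Set.EqOn f f₀ P ∧ f v = x := by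
  refine ⟨swap (f₀ v) x * f₀, fun p hp => ?_, by simp⟩
  refine swap_apply_of_ne_of_ne (f₀.injective.ne (ne_of_mem_of_not_mem hp hv)) ?_
  exact ne_of_mem_of_not_mem (mem_image_of_mem f₀ hp) hx

theorem exists_perm_eqOn_apply_eq_apply_eq (f₀ : Perm V) {P : Finset V} {v l x y : V} (hv : v ∉ P)
    (hl : l ∉ P) (hvl : v ≠ l) (hx : x ∉ P.image f₀) (hy : y ∉ P.image f₀) (hxy : x ≠ y) :
    ∃ f : Perm V, Set.EqOn f f₀ P ∧ f v = x ∧ f l = y := by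
  obtain ⟨g, hg, rfl⟩ := exists_perm_eqOn_apply_eq f₀ hv hx
  rw [← image_congr hg] at hy
  obtain ⟨f, hf, hfl⟩ := exists_perm_eqOn_apply_eq g (P := insert v P) (v := l) (x := y)
    (by simp [hl, hvl.symm]) (by simp [image_insert, hy, hxy.symm])
  exact ⟨f, (hf.mono (by simp)).trans hg, hf (by simp), hfl⟩

theorem exists_perm_eqOn_sum_le [Fintype V] (f₀ : Perm V) {Q K : Finset V}
    (hK : Disjoint K Q) {d : V → ℤ} {M : ℤ} (hM : 0 ≤ M) (hd : ∀ s ∉ Q.image f₀, d s ≤ M) :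
    ∃ f : Perm V, Set.EqOn f f₀ Q ∧
      ∑ w ∈ K, d (f w) ≤ M * (#K - #{s ∈ (Q.image f₀)ᶜ | d s ≤ 0} : ℕ) := by
  have hcard : #K ≤ #(Q.image f₀)ᶜ := by
    rw [card_compl, card_image_of_injective _ f₀.injective, ← card_compl]
    exact card_le_card (subset_compl_iff_disjoint_right.2 hK)
  obtain ⟨S, hSsub, hSK, hS⟩ :=
    exists_subset_card_eq_sum_le hM (fun s hs => hd s (mem_compl.1 hs)) hcard
  obtain ⟨f, hf, rfl⟩ :=
    exists_perm_eqOn_image_eq f₀ hK (subset_compl_iff_disjoint_right.1 hSsub) hSK.symm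
  rw [sum_image f.injective.injOn] at hS
  exact ⟨f, hf, hS⟩

theorem card_le_four_mul_card_filter_compl_image [Fintype V] (f : Perm V) {P : Finset V}
    {v l : V} (hv : v ∉ P) (hl : l ∉ insert v P) {p : V → Prop} [DecidablePred p]
    (h : 4 * #{s ∈ (P.image f)ᶜ | s ≠ f v ∧ s ≠ f l ∧ ¬ p s} ≤ 3 * Fintype.card V) :
    Fintype.card V ≤ 4 * (#{s ∈ ((insert l (insert v P)).image f)ᶜ | p s} + #P + 2) := by
  have hcard := card_compl ((insert l (insert v P)).image f)
  rw [card_image_of_injective _ f.injective, card_insert_of_notMem hl, card_insert_of_notMem hv,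
    ← card_filter_add_card_filter_not (p ·)] at hcard
  have hfilter : {s ∈ ((insert l (insert v P)).image f)ᶜ | ¬ p s} =
      {s ∈ (P.image f)ᶜ | s ≠ f v ∧ s ≠ f l ∧ ¬ p s} := by
    ext s
    simp only [image_insert, mem_filter, mem_compl, mem_insert, not_or]
    tauto
  rw [hfilter] at hcard
  omega

end Permutations

section CopyWeight

variable [Fintype V]

/-- The weight `c(F')` of the copy `F' = f(F)` of `F`. -/
def copyWeight (c : Sym2 V → ℤ) (F : SimpleGraph V) [DecidableRel F.Adj] (f : V → V) : ℤ :=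
  ∑ e ∈ F.edgeFinset, c (e.map f)

variable [DecidableEq V] (c : Sym2 V → ℤ) (F : SimpleGraph V) [DecidableRel F.Adj]

theorem sum_perm_copyWeight_eq_zero (hbal : ∑ e ∈ (⊤ : SimpleGraph V).edgeFinset, c e = 0) :
    ∑ f : Perm V, copyWeight c F f = 0 := by
  simp only [copyWeight]
  rw [sum_comm]
  exact sum_eq_zero fun e he =>
    sum_perm_map_eq_zero hbal (F.not_isDiag_of_mem_edgeFinset he)

variable {F}

theorem sum_edgeFinset_filter_mem_notMem {M : Type*} [AddCommMonoid M] (g : Sym2 V → M)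
    {v l : V} (hvl : v ≠ l) :
    ∑ e ∈ F.edgeFinset with v ∈ e ∧ l ∉ e, g e =
      ∑ w ∈ (F.neighborFinset v).erase l, g s(v, w) := by
  rw [← sum_image (f := g) (g := fun w => s(v, w)) fun _ _ _ _ h => Sym2.congr_right.1 h]
  refine sum_congr ?_ fun _ _ => rfl
  ext e
  simp only [mem_filter, SimpleGraph.mem_edgeFinset, mem_image, mem_erase,
    SimpleGraph.mem_neighborFinset]
  constructor
  · rintro ⟨he, hv, hl⟩
    obtain ⟨w, rfl⟩ := hv
    exact ⟨w, ⟨fun h => hl (by simp [h]), he⟩, rfl⟩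
  · rintro ⟨w, ⟨hwl, hw⟩, rfl⟩
    exact ⟨hw, by simp, by simp [hvl.symm, hwl.symm]⟩

theorem copyWeight_sub_copyWeight_mul_swap (f : Perm V) {v l : V} (hvl : v ≠ l) :
    copyWeight c F f - copyWeight c F (f * swap v l) =
      ∑ w ∈ (F.neighborFinset v).erase l, (c s(f v, f w) - c s(f l, f w)) +
        ∑ w ∈ (F.neighborFinset l).erase v, (c s(f l, f w) - c s(f v, f w)) := by
  let g (e : Sym2 V) : ℤ := c (e.map f) - c (e.map (f * swap v l))
  have hfix {e : Sym2 V} (he : v ∈ e ↔ l ∈ e) : g e = 0 := by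
    simp only [g, Perm.coe_mul, ← Sym2.map_map, map_swap_eq_self_of_mem_iff_mem he, sub_self]
  have hsplit : ∑ e ∈ F.edgeFinset, g e =
      ∑ e ∈ F.edgeFinset with v ∈ e ∧ l ∉ e, g e + ∑ e ∈ F.edgeFinset with l ∈ e ∧ v ∉ e, g e := by
    simp only [sum_filter, ← sum_add_distrib]
    refine sum_congr rfl fun e _ => ?_
    have := @hfix e
    grind
  rw [copyWeight, copyWeight, ← sum_sub_distrib, hsplit, sum_edgeFinset_filter_mem_notMem g hvl,
    sum_edgeFinset_filter_mem_notMem g hvl.symm]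
  refine congrArg₂ _ (sum_congr rfl fun w hw => ?_) (sum_congr rfl fun w hw => ?_) <;>
    obtain ⟨hne, hw⟩ := mem_erase.1 hw <;>
    have hadj := F.ne_of_adj ((F.mem_neighborFinset _ _).1 hw)
  · simp [g, swap_apply_of_ne_of_ne hadj.symm hne]
  · simp [g, swap_apply_of_ne_of_ne hne hadj.symm]

variable {c}

theorem IsSignColouring.copyWeight_sub_copyWeight_mul_swap_le (hc : IsSignColouring c)
    (f : Perm V) {v l : V} (hvl : v ≠ l) (hl : F.degree l ≤ 1) :
    copyWeight c F f - copyWeight c F (f * swap v l) ≤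
      2 + ∑ w ∈ (F.neighborFinset v).erase l, (c s(f v, f w) - c s(f l, f w)) := by
  have hleaf : ∑ w ∈ (F.neighborFinset l).erase v, (c s(f l, f w) - c s(f v, f w)) ≤ 2 :=
    calc ∑ w ∈ (F.neighborFinset l).erase v, (c s(f l, f w) - c s(f v, f w))
      _ ≤ 2 * #((F.neighborFinset l).erase v) := hc.sum_sub_le_two_mul_card (by simp) (by simp)
      _ ≤ 2 := by
          have := (card_erase_le (s := F.neighborFinset l) (a := v)).trans hl
          omega
  rw [copyWeight_sub_copyWeight_mul_swap c f hvl]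
  linarith

theorem IsSignColouring.exists_abs_copyWeight_le_of_swap (hc : IsSignColouring c) {f : Perm V}
    {v l : V} (hvl : v ≠ l) (hl : F.degree l ≤ 1) (hpos : 0 < copyWeight c F f)
    (hneg : copyWeight c F (f * swap v l) < 0) {k : ℤ}
    (hk : ∑ w ∈ (F.neighborFinset v).erase l, (c s(f v, f w) - c s(f l, f w)) ≤ 2 * k) :
    ∃ g : Perm V, |copyWeight c F g| ≤ 1 + k := by
  have hsub := hc.copyWeight_sub_copyWeight_mul_swap_le f hvl hl
  rcases le_or_gt (copyWeight c F f) (1 + k) with hle | hgt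
  · exact ⟨f, abs_le.2 ⟨by linarith, hle⟩⟩
  · exact ⟨f * swap v l, abs_le.2 ⟨by linarith, by linarith⟩⟩

end CopyWeight

section DecidesSign

/-- The restriction of a permutation to `P` decides the sign of its weight `W`: two permutations
that agree on `P` never have weights of opposite signs. -/
def DecidesSign (W : Perm V → ℤ) (P : Finset V) : Prop :=
  ∀ ⦃f g : Perm V⦄, Set.EqOn f g P → 0 < W f → 0 ≤ W g

variable {W : Perm V → ℤ}

theorem not_decidesSign_empty [Fintype V] [DecidableEq V] (hsum : ∑ f, W f = 0)
    (hW : ∀ f, W f ≠ 0) : ¬ DecidesSign W ∅ := by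
  intro h
  obtain ⟨f, -, hf⟩ := exists_pos_of_sum_zero_of_exists_nonzero W hsum ⟨1, mem_univ _, hW 1⟩
  exact hf.ne' ((sum_eq_zero_iff_of_nonneg fun g _ => h (by simp) hf).1 hsum f (mem_univ f))

theorem decidesSign_univ_erase [Fintype V] [DecidableEq V] (W : Perm V → ℤ) (l : V) :
    DecidesSign W (univ.erase l) := by
  intro f g hfg hf
  have hne {x : V} (hx : x ≠ l) : f x = g x := hfg (by simpa using hx)
  have hl : f.symm (g l) = l := by
    by_contra hx
    exact hx (g.injective ((hne hx).symm.trans (f.apply_symm_apply _)))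
  suffices f = g from (this ▸ hf).le
  ext x
  rcases eq_or_ne x l with rfl | hx
  · exact (f.symm_apply_eq.1 hl).symm
  · exact hne hx

theorem exists_subset_minimal_decidesSign [DecidableEq V] {Q : Finset V} (hQ : DecidesSign W Q) :
    ∃ P ⊆ Q, DecidesSign W P ∧ ∀ v ∈ P, ¬ DecidesSign W (P.erase v) := by
  obtain ⟨P, hPQ, hP⟩ := exists_minimal_le_of_wellFoundedLT (DecidesSign W) Q hQ
  exact ⟨P, hPQ, hP.prop, fun v hv h => hP.not_prop_of_lt (erase_ssubset hv) h⟩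

theorem exists_partition_of_decidesSign_insert [Fintype V] [DecidableEq V] (hW : ∀ f, W f ≠ 0)
    {P : Finset V} {v l : V} (hv : v ∉ P) (hl : l ∉ P) (hP : ¬ DecidesSign W P)
    (hins : DecidesSign W (insert v P)) :
    ∃ (f₀ : Perm V) (X Y : Finset V), X.Nonempty ∧ Y.Nonempty ∧ Disjoint X Y ∧
      X ∪ Y = (P.image f₀)ᶜ ∧ ∀ f : Perm V, Set.EqOn f f₀ P → f v ∈ X → f l ∈ Y →
        0 < W f ∧ W (f * swap v l) < 0 := by
  classical
  unfold DecidesSign at hP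
  push Not at hP
  obtain ⟨f₀, f₁, hagree, hpos, hneg⟩ := hP
  have hext {f g : Perm V} (hf : Set.EqOn f f₀ P) (hg : Set.EqOn g f₀ P) (hfg : f v = g v) :
      Set.EqOn f g (insert v P : Finset V) := by
    intro p hp
    rcases mem_insert.1 hp with rfl | hp
    · exact hfg
    · exact (hf hp).trans (hg hp).symm
  have hnotMem {f : Perm V} (hf : Set.EqOn f f₀ P) : f v ∉ P.image f₀ := by
    rwa [← image_congr hf, f.injective.mem_finset_image]
  let IsPositive (x : V) : Prop := ∃ f : Perm V, Set.EqOn f f₀ P ∧ f v = x ∧ 0 < W f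
  refine ⟨f₀, {x ∈ (P.image f₀)ᶜ | IsPositive x}, {x ∈ (P.image f₀)ᶜ | ¬ IsPositive x},
    ⟨f₀ v, ?_⟩, ⟨f₁ v, ?_⟩, disjoint_filter_filter_not _ _ _, filter_union_filter_not_eq _ _, ?_⟩
  · exact mem_filter.2 ⟨mem_compl.2 (hnotMem fun _ _ => rfl), f₀, fun _ _ => rfl, rfl, hpos⟩
  · refine mem_filter.2 ⟨mem_compl.2 (hnotMem hagree.symm), ?_⟩
    rintro ⟨f, hf, hfv, hWf⟩
    exact hneg.not_ge (hins (hext hf hagree.symm hfv) hWf)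
  · intro f hf hX hY
    have hswap : Set.EqOn (f * swap v l) f₀ P := fun p hp => by
      rw [Perm.mul_apply, swap_apply_of_ne_of_ne (ne_of_mem_of_not_mem hp hv)
        (ne_of_mem_of_not_mem hp hl), hf hp]
    obtain ⟨g, hg, hgv, hWg⟩ := (mem_filter.1 hX).2
    refine ⟨(hins (hext hg hf hgv) hWg).lt_of_ne' (hW f), lt_of_not_ge fun hnonneg => ?_⟩
    exact (mem_filter.1 hY).2 ⟨f * swap v l, hswap, by simp, hnonneg.lt_of_ne' (hW _)⟩

end DecidesSign

namespace IsSignColouring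

variable [Fintype V] [DecidableEq V] {c : Sym2 V → ℤ} {F : SimpleGraph V} [DecidableRel F.Adj]
  {P : Finset V} {v l : V}

theorem exists_abs_copyWeight_le_one_add_degree (hc : IsSignColouring c)
    (hW : ∀ f : Perm V, copyWeight c F f ≠ 0) (hleaf : F.degree l ≤ 1)
    (hv : v ∉ P) (hl : l ∉ insert v P) (hP : ¬ DecidesSign (fun f => copyWeight c F f) P)
    (hins : DecidesSign (fun f => copyWeight c F f) (insert v P)) :
    ∃ f : Perm V, |copyWeight c F f| ≤ 1 + F.degree v := by
  obtain ⟨hlv, hlP⟩ : l ≠ v ∧ l ∉ P := by simpa using hl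
  obtain ⟨f₀, X, Y, ⟨x, hx⟩, ⟨y, hy⟩, hXY, hunion, hsign⟩ :=
    exists_partition_of_decidesSign_insert hW hv hlP hP hins
  obtain ⟨f, hf, rfl, rfl⟩ := exists_perm_eqOn_apply_eq_apply_eq f₀ hv hlP hlv.symm
    (mem_compl.1 (hunion ▸ mem_union_left Y hx)) (mem_compl.1 (hunion ▸ mem_union_right X hy))
    (ne_of_mem_of_not_mem hx (disjoint_right.1 hXY hy))
  obtain ⟨hpos, hneg⟩ := hsign f hf hx hy
  refine hc.exists_abs_copyWeight_le_of_swap hlv.symm hleaf hpos hneg ?_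
  calc ∑ w ∈ (F.neighborFinset v).erase l, (c s(f v, f w) - c s(f l, f w))
    _ ≤ 2 * #((F.neighborFinset v).erase l) := hc.sum_sub_le_two_mul_card (by simp) (by simp)
    _ ≤ 2 * F.degree v := by
        have : #((F.neighborFinset v).erase l) ≤ F.degree v := card_erase_le
        omega

theorem exists_perm_eqOn_sum_neighborFinset_le (hc : IsSignColouring c) (f₁ : Perm V) (hl : l ∉ P) :
    ∃ f : Perm V, Set.EqOn f f₁ (insert l (insert v P) : Finset V) ∧
      ∑ w ∈ (F.neighborFinset v).erase l, (c s(f v, f w) - c s(f l, f w)) ≤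
        2 * (#(F.neighborFinset v ∩ P) + (F.degree v -
          #{s ∈ ((insert l (insert v P)).image f₁)ᶜ | c s(f₁ v, s) ≤ c s(f₁ l, s)} : ℕ) : ℕ) := by
  obtain ⟨f, hf, hsum⟩ := exists_perm_eqOn_sum_le f₁
    (disjoint_sdiff_self_left : Disjoint (F.neighborFinset v \ insert l (insert v P)) _)
    (d := fun s => c s(f₁ v, s) - c s(f₁ l, s)) zero_le_two fun s hs => by
      simp only [image_insert, mem_insert, not_or] at hs
      exact hc.sub_le_two hs.2.1 hs.1
  refine ⟨f, hf, ?_⟩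
  have hsplit : (F.neighborFinset v).erase l =
      (F.neighborFinset v ∩ P) ∪ (F.neighborFinset v \ insert l (insert v P)) := by
    have := F.notMem_neighborFinset_self v
    grind
  have hdisj : Disjoint (F.neighborFinset v ∩ P)
      (F.neighborFinset v \ insert l (insert v P)) := by
    grind [disjoint_left]
  have hP := hc.sum_sub_le_two_mul_card (f := f) (A := F.neighborFinset v ∩ P) (v := v) (l := l)
    (by simp) (by grind)
  have hcard : #(F.neighborFinset v \ insert l (insert v P)) ≤ F.degree v :=
    card_le_card sdiff_subset
  rw [hsplit, sum_union hdisj]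
  simp only [sub_nonpos] at hsum
  rw [← hf (by simp : v ∈ _), ← hf (by simp : l ∈ _)] at hsum ⊢
  omega

theorem exists_abs_copyWeight_le_of_decidesSign_insert (hc : IsSignColouring c)
    (hbal : ∑ e ∈ (⊤ : SimpleGraph V).edgeFinset, c e = 0)
    (hW : ∀ f : Perm V, copyWeight c F f ≠ 0) (hleaf : F.degree l ≤ 1)
    (hv : v ∉ P) (hl : l ∉ insert v P) (hP : ¬ DecidesSign (fun f => copyWeight c F f) P)
    (hins : DecidesSign (fun f => copyWeight c F f) (insert v P)) :
    ∃ f : Perm V, (|copyWeight c F f| : ℝ) ≤ 1 + #(F.neighborFinset v ∩ P) +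
      max (F.degree v + #P + 2 - Fintype.card V / 4 : ℝ) 0 := by
  obtain ⟨hlv, hlP⟩ : l ≠ v ∧ l ∉ P := by simpa using hl
  obtain ⟨f₀, X, Y, hX, hY, hXY, hunion, hsign⟩ :=
    exists_partition_of_decidesSign_insert hW hv hlP hP hins
  obtain ⟨x, hx, y, hy, hbad⟩ := hc.exists_four_mul_card_filter_lt_le hbal hX hY hXY
  obtain ⟨f₁, hf₁, rfl, rfl⟩ := exists_perm_eqOn_apply_eq_apply_eq f₀ hv hlP hlv.symm
    (mem_compl.1 (hunion ▸ mem_union_left Y hx)) (mem_compl.1 (hunion ▸ mem_union_right X hy))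
    (ne_of_mem_of_not_mem hx (disjoint_right.1 hXY hy))
  obtain ⟨f, hf, hsum⟩ := hc.exists_perm_eqOn_sum_neighborFinset_le (F := F) (v := v) f₁ hlP
  have hfP : Set.EqOn f f₀ P := (hf.mono (coe_subset.2 (by grind))).trans hf₁
  have hfv : f v = f₁ v := hf (by simp)
  have hfl : f l = f₁ l := hf (by simp)
  obtain ⟨hpos, hneg⟩ := hsign f hfP (hfv ▸ hx) (hfl ▸ hy)
  obtain ⟨g, hg⟩ := hc.exists_abs_copyWeight_le_of_swap hlv.symm hleaf hpos hneg hsum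
  refine ⟨g, ?_⟩
  rw [hunion, ← image_congr hf₁] at hbad
  have hgood := card_le_four_mul_card_filter_compl_image f₁ hv hl
    (p := fun s => c s(f₁ v, s) ≤ c s(f₁ l, s)) (by simpa only [not_le] using hbad)
  generalize #{s ∈ ((insert l (insert v P)).image f₁)ᶜ | c s(f₁ v, s) ≤ c s(f₁ l, s)} = m at *
  have hdeg : ((F.degree v - m : ℕ) : ℝ) ≤
      max (F.degree v + #P + 2 - Fintype.card V / 4 : ℝ) 0 := by
    rcases le_total m (F.degree v) with hm | hm
    · have : (Fintype.card V : ℝ) ≤ 4 * (m + #P + 2) := mod_cast hgood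
      rw [Nat.cast_sub hm]
      exact le_max_of_le_left (by linarith)
    · rw [Nat.sub_eq_zero_of_le hm, Nat.cast_zero]
      exact le_max_right _ _
  calc (|copyWeight c F g| : ℝ) ≤ 1 + (#(F.neighborFinset v ∩ P) + (F.degree v - m : ℕ)) := by
        exact_mod_cast hg
    _ ≤ _ := by linarith

theorem exists_nonempty_forall_mem_exists_abs_copyWeight_le (hc : IsSignColouring c)
    (hbal : ∑ e ∈ (⊤ : SimpleGraph V).edgeFinset, c e = 0)
    (hW : ∀ f : Perm V, copyWeight c F f ≠ 0) (hleaf : F.degree l ≤ 1) :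
    ∃ P : Finset V, P.Nonempty ∧ ∀ v ∈ P,
      (∃ f : Perm V, |copyWeight c F f| ≤ 1 + F.degree v) ∧
      ∃ f : Perm V, (|copyWeight c F f| : ℝ) ≤ 1 + #(F.neighborFinset v ∩ P) +
        max (F.degree v + #P + 1 - Fintype.card V / 4 : ℝ) 0 := by
  obtain ⟨P, hPl, hP, hmin⟩ :=
    exists_subset_minimal_decidesSign (decidesSign_univ_erase (fun f => copyWeight c F f) l)
  refine ⟨P, nonempty_iff_ne_empty.2 ?_, fun v hv => ?_⟩
  · rintro rfl
    exact not_decidesSign_empty (sum_perm_copyWeight_eq_zero c F hbal) hW hP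
  rw [← insert_erase hv] at hP hPl
  have hl : l ∉ insert v (P.erase v) := fun h => by simpa using hPl h
  refine ⟨hc.exists_abs_copyWeight_le_one_add_degree hW hleaf (notMem_erase v P) hl (hmin v hv) hP,
    ?_⟩
  have hinter : F.neighborFinset v ∩ P.erase v = F.neighborFinset v ∩ P := by
    rw [inter_erase, erase_eq_of_notMem (by simp)]
  have hcard : (#(P.erase v) : ℝ) + 2 = #P + 1 := by
    rw [← card_erase_add_one hv]
    push_cast
    ring
  simpa only [hinter, add_assoc, hcard] using hc.exists_abs_copyWeight_le_of_decidesSign_insert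
    hbal hW hleaf (notMem_erase v P) hl (hmin v hv) hP

theorem exists_abs_copyWeight_le_max [Nonempty V] (hc : IsSignColouring c)
    (hbal : ∑ e ∈ (⊤ : SimpleGraph V).edgeFinset, c e = 0) (hF : F.IsAcyclic)
    {ε : ℝ} (hε : 1 / (Fintype.card V : ℝ) ≤ ε) :
    ∃ f : Perm V, (|copyWeight c F f| : ℝ) ≤
      max (1 + 2 / ε) (2 + max (F.maxDegree - (1 / 4 - 2 * ε) * Fintype.card V) 0) := by
  by_cases! hW : ∃ f : Perm V, copyWeight c F f = 0
  · obtain ⟨f, hf⟩ := hW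
    refine ⟨f, le_max_of_le_right ?_⟩
    rw [hf, Int.cast_zero, abs_zero]
    positivity
  obtain ⟨l, hleaf⟩ := exists_degree_le_one_of_isAcyclic hF
  obtain ⟨P, hPne, hP⟩ := hc.exists_nonempty_forall_mem_exists_abs_copyWeight_le hbal hW hleaf
  by_cases! hlight : ∃ v ∈ P, (F.degree v : ℝ) ≤ 2 / ε
  · obtain ⟨v, hv, hdeg⟩ := hlight
    obtain ⟨f, hf⟩ := (hP v hv).1
    have : (|copyWeight c F f| : ℝ) ≤ 1 + F.degree v := mod_cast hf
    exact ⟨f, le_max_of_le_left (by linarith)⟩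
  · have hn : (0 : ℝ) < Fintype.card V := mod_cast Fintype.card_pos
    have hε0 : 0 < ε := (one_div_pos.2 hn).trans_le hε
    have hεn : 1 ≤ ε * Fintype.card V := (div_le_iff₀ hn).1 hε
    have hcard : (#P : ℝ) < ε * Fintype.card V := by
      have := card_mul_lt_two_mul_card_of_isAcyclic hF fun v hv => (hlight v hv).le
      rw [mul_div_assoc', div_lt_iff₀ hε0] at this
      linarith
    obtain ⟨v, hv, hnbr⟩ := exists_card_neighborFinset_inter_le_one_of_isAcyclic hF hPne
    obtain ⟨f, hf⟩ := (hP v hv).2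
    refine ⟨f, hf.trans (le_max_of_le_right (add_le_add ?_ (max_le_max_right 0 ?_)))⟩
    · have : (#(F.neighborFinset v ∩ P) : ℝ) ≤ 1 := mod_cast hnbr
      linarith
    · have : (F.degree v : ℝ) ≤ F.maxDegree := mod_cast F.degree_le_maxDegree v
      linarith

end IsSignColouring

theorem almost_balanced_spanning_forest_eps_general [Fintype V] [DecidableEq V] [Nonempty V]
    {c : Sym2 V → ℤ} (hc : ∀ e ∈ (⊤ : SimpleGraph V).edgeFinset, c e = 1 ∨ c e = -1)
    (hbal : ∑ e ∈ (⊤ : SimpleGraph V).edgeFinset, c e = 0)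
    {F : SimpleGraph V} [DecidableRel F.Adj] (hF : F.IsAcyclic)
    {ε : ℝ} (hε : 1 / (Fintype.card V : ℝ) ≤ ε) :
    ∃ f : V ↪ V, |(∑ e ∈ F.edgeFinset, c (e.map f) : ℝ)| ≤
      max (1 + 2 / ε) (2 + max (F.maxDegree - (1 / 4 - 2 * ε) * Fintype.card V) 0) := by
  replace hc : IsSignColouring c := fun x y hxy => hc s(x, y) (by simpa using hxy)
  obtain ⟨f, hf⟩ := hc.exists_abs_copyWeight_le_max hbal hF hε
  exact ⟨f.toEmbedding, by simpa [copyWeight] using hf⟩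

/-- Let `n ≥ 32`, let `c` be a balanced `±1`-colouring of the edges of
`K_n`, let `F` be a forest on `n` vertices with maximum degree `Δ ≤ n/2`, and let
`1/n ≤ ε ≤ 1/8`. Then there is a copy `F'` of `F` in `K_n` with
`|c(F')| ≤ max (1 + 2/ε) (2 + (Δ - (1/4 - 2ε)n)₊)`. -/
theorem almost_balanced_spanning_forest_eps
    (n : ℕ) (hn : 32 ≤ n)
    (c : Sym2 (Fin n) → ℤ)
    (hc : ∀ e ∈ (⊤ : SimpleGraph (Fin n)).edgeFinset, c e = 1 ∨ c e = -1)
    (hbal : ∑ e ∈ (⊤ : SimpleGraph (Fin n)).edgeFinset, c e = 0)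
    (F : SimpleGraph (Fin n)) [DecidableRel F.Adj]
    (hF : F.IsAcyclic) (Δ : ℕ) (hΔ : F.maxDegree = Δ)
    (hdeg : (Δ : ℝ) ≤ (n : ℝ) / 2)
    (ε : ℝ) (hε₁ : 1 / (n : ℝ) ≤ ε) (hε₂ : ε ≤ 1 / 8) :
    ∃ f : Fin n ↪ Fin n,
      |(∑ e ∈ F.edgeFinset, c (Sym2.map (⇑f) e) : ℝ)| ≤
        max (1 + 2 / ε) (2 + max ((Δ : ℝ) - (1 / 4 - 2 * ε) * n) 0) := by
  subst hΔ
  have : NeZero n := ⟨by omega⟩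
  simpa using almost_balanced_spanning_forest_eps_general hc hbal hF (ε := ε) (by simpa using hε₁)
end

section
/- Let n be a positive integer divisible by 4, and identify the vertex set of K_n with {u_i : i ∈ [n/2]} ∪ {v_i : i ∈ [n/2]}. Define c₀ : E(K_n) → {−1, +1} by: c₀(u_i u_j) = −1 for all i, j; c₀(v_i v_j) = +1 for all i, j; and c₀(u_i v_j) = −1 if i + j is odd and c₀(u_i v_j) = +1 if i + j is even. Then c₀ is a balanced colouring, and every copy T in K_n of the star on n vertices satisfies |c₀(T)| = (n − 2)/2. -/
/-!
Counting every edge from both of its ends, twice the total colour of `K_n` is the sum of the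
colours of its `n` spanning stars, so it suffices to compute the latter. Since `n / 2` is even, the
edges between a fixed vertex and the opposite side have alternating colours and cancel; the star
centred at `u_i` thus has colour `-(n / 2 - 1)` and the one centred at `v_i` has colour `n / 2 - 1`.
-/

open Finset

theorem sum_ite_odd_add_eq_zero {R : Type*} [Ring R] {m : ℕ} (hm : Even m) (k : ℕ) :
    ∑ j : Fin m, (if Odd (k + (j : ℕ)) then (-1 : R) else 1) = 0 := by
  calc ∑ j : Fin m, (if Odd (k + (j : ℕ)) then (-1 : R) else 1)
      = ∑ j : Fin m, (-1) ^ k * (-1) ^ (j : ℕ) :=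
        sum_congr rfl fun j _ => by
          simp only [← pow_add, neg_one_pow_eq_ite (n := k + j), ← Nat.not_even_iff_odd, ite_not]
    _ = 0 := by rw [← mul_sum, Fin.sum_neg_one_pow, if_pos hm, mul_zero]

section Handshake

variable {V M : Type*} [Fintype V] [AddCommMonoid M]
variable (G : SimpleGraph V) [DecidableRel G.Adj] (f : Sym2 V → M)

theorem sum_darts_eq_sum_sum_neighborFinset :
    ∑ d : G.Dart, f d.edge = ∑ v, ∑ w ∈ G.neighborFinset v, f s(v, w) := by
  classical
  rw [← sum_fiberwise univ (fun d : G.Dart => d.fst)]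
  refine sum_congr rfl fun v _ => ?_
  rw [G.dart_fst_fiber, sum_image (G.dartOfNeighborSet_injective v).injOn]
  exact (sum_subtype _ (fun w => G.mem_neighborFinset v w) fun w => f s(v, w)).symm

theorem sum_darts_eq_two_nsmul_sum_edgeFinset :
    ∑ d : G.Dart, f d.edge = 2 • ∑ e ∈ G.edgeFinset, f e := by
  classical
  rw [← sum_fiberwise_of_maps_to (t := G.edgeFinset) (g := SimpleGraph.Dart.edge)
    fun d _ => SimpleGraph.mem_edgeFinset.mpr d.edge_mem, smul_sum]
  refine sum_congr rfl fun e he => ?_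
  rw [← G.dart_edge_fiber_card e (SimpleGraph.mem_edgeFinset.mp he)]
  exact sum_eq_card_nsmul fun d hd => congrArg f (mem_filter.mp hd).2

theorem sum_sum_neighborFinset_eq_two_nsmul_sum_edgeFinset :
    ∑ v, ∑ w ∈ G.neighborFinset v, f s(v, w) = 2 • ∑ e ∈ G.edgeFinset, f e :=
  (sum_darts_eq_sum_sum_neighborFinset G f).symm.trans
    (sum_darts_eq_two_nsmul_sum_edgeFinset G f)

end Handshake

/-- The total colour `c(T)` of the spanning star `T` of the complete graph on `V` centred at `x`;
every copy of the star on `|V|` vertices is of this form. -/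
def starSum {V M : Type*} [Fintype V] [DecidableEq V] [AddCommMonoid M]
    (c : Sym2 V → M) (x : V) : M :=
  ∑ w with w ≠ x, c s(x, w)

theorem sum_starSum {V M : Type*} [Fintype V] [DecidableEq V] [AddCommMonoid M]
    (c : Sym2 V → M) :
    ∑ x, starSum c x = 2 • ∑ e ∈ (⊤ : SimpleGraph V).edgeFinset, c e := by
  rw [← sum_sum_neighborFinset_eq_two_nsmul_sum_edgeFinset]
  refine sum_congr rfl fun x _ => sum_congr ?_ fun _ _ => rfl
  ext w
  simp [eq_comm]

section TwoBlocks

variable {α β M : Type*} [Fintype α] [Fintype β] [DecidableEq α] [DecidableEq β] [AddCommMonoid M]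
variable (c : Sym2 (α ⊕ β) → M)

theorem starSum_inl (a : α) :
    starSum c (.inl a) =
      ∑ a' ∈ univ.erase a, c s(.inl a, .inl a') + ∑ b, c s(.inl a, .inr b) := by
  have leaves : ({w | w ≠ Sum.inl a} : Finset (α ⊕ β)) = (univ.erase a).disjSum univ := by
    ext (a' | b) <;> simp
  rw [starSum, leaves, sum_disjSum]

theorem starSum_inr (b : β) :
    starSum c (.inr b) =
      ∑ a, c s(.inl a, .inr b) + ∑ b' ∈ univ.erase b, c s(.inr b, .inr b') := by
  have leaves : ({w | w ≠ Sum.inr b} : Finset (α ⊕ β)) = univ.disjSum (univ.erase b) := by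
    ext (a | b') <;> simp
  simp only [starSum, leaves, sum_disjSum, Sym2.eq_swap (a := Sum.inr b) (b := Sum.inl _)]

variable {c} {z : M}

theorem starSum_inl_eq_nsmul (hα : ∀ a a' : α, a ≠ a' → c s(.inl a, .inl a') = z) {a : α}
    (hrow : ∑ b, c s(.inl a, .inr b) = 0) :
    starSum c (.inl a) = (Fintype.card α - 1) • z := by
  rw [starSum_inl, hrow, add_zero, ← card_univ, ← card_erase_of_mem (mem_univ a)]
  exact sum_eq_card_nsmul fun a' ha' => hα a a' (ne_of_mem_erase ha').symm

theorem starSum_inr_eq_nsmul (hβ : ∀ b b' : β, b ≠ b' → c s(.inr b, .inr b') = z) {b : β}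
    (hcol : ∑ a, c s(.inl a, .inr b) = 0) :
    starSum c (.inr b) = (Fintype.card β - 1) • z := by
  rw [starSum_inr, hcol, zero_add, ← card_univ, ← card_erase_of_mem (mem_univ b)]
  exact sum_eq_card_nsmul fun b' hb' => hβ b b' (ne_of_mem_erase hb').symm

end TwoBlocks

theorem star_imbalance_construction_general {α β : Type*} [Fintype α] [Fintype β] [DecidableEq α]
    [DecidableEq β] (hcard : Fintype.card α = Fintype.card β) (c : Sym2 (α ⊕ β) → ℤ)
    (hα : ∀ a a' : α, a ≠ a' → c s(.inl a, .inl a') = -1)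
    (hβ : ∀ b b' : β, b ≠ b' → c s(.inr b, .inr b') = 1)
    (hrow : ∀ a, ∑ b, c s(.inl a, .inr b) = 0)
    (hcol : ∀ b, ∑ a, c s(.inl a, .inr b) = 0) :
    ∑ e ∈ (⊤ : SimpleGraph (α ⊕ β)).edgeFinset, c e = 0 ∧
      ∀ x, |starSum c x| = ((Fintype.card α - 1 : ℕ) : ℤ) := by
  have star_inl (a : α) : starSum c (.inl a) = (Fintype.card α - 1) • (-1) :=
    starSum_inl_eq_nsmul hα (hrow a)
  have star_inr (b : β) : starSum c (.inr b) = (Fintype.card β - 1) • 1 :=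
    starSum_inr_eq_nsmul hβ (hcol b)
  constructor
  · have star_total : ∑ x, starSum c x = 0 := by
      simp [Fintype.sum_sum_type, star_inl, star_inr, hcard]
    simpa [sum_starSum] using star_total
  · rintro (a | b)
    · simp [star_inl]
    · simp [star_inr, hcard]

/-- Let `n > 0` be divisible by `4` and identify the vertex set of
`K_n` with `{u_i : i ∈ [n/2]} ∪ {v_i : i ∈ [n/2]}` (here `u_i = Sum.inl i` and
`v_i = Sum.inr i`, with `i ∈ [n/2]` represented one-based as `(i : ℕ) + 1` for
`i : Fin (n/2)`). Let `c₀` colour every edge `u_i u_j` with `-1`, every edge `v_i v_j`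
with `+1`, and an edge `u_i v_j` with `-1` iff `i + j` is odd. Then `c₀` is balanced,
and every copy `T` of the star on `n` vertices (i.e. every star centred at a vertex)
satisfies `|c₀(T)| = (n - 2)/2`. -/
theorem star_imbalance_construction
    (n : ℕ) (hn : 0 < n) (h4 : 4 ∣ n)
    (c₀ : Sym2 (Fin (n / 2) ⊕ Fin (n / 2)) → ℤ)
    (hu : ∀ i j : Fin (n / 2), i ≠ j → c₀ s(Sum.inl i, Sum.inl j) = -1)
    (hv : ∀ i j : Fin (n / 2), i ≠ j → c₀ s(Sum.inr i, Sum.inr j) = 1)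
    (huv : ∀ i j : Fin (n / 2),
      c₀ s(Sum.inl i, Sum.inr j) =
        if Odd (((i : ℕ) + 1) + ((j : ℕ) + 1)) then -1 else 1) :
    (∑ e ∈ (⊤ : SimpleGraph (Fin (n / 2) ⊕ Fin (n / 2))).edgeFinset, c₀ e = 0) ∧
      ∀ x : Fin (n / 2) ⊕ Fin (n / 2),
        |∑ w ∈ Finset.univ.filter fun w => w ≠ x, c₀ s(x, w)| = ((n : ℤ) - 2) / 2 := by
  have even_half : Even (n / 2) := by
    rw [Nat.even_iff]
    omega
  have hrow (i : Fin (n / 2)) : ∑ j, c₀ s(.inl i, .inr j) = 0 := by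
    rw [← sum_ite_odd_add_eq_zero even_half (i + 2)]
    exact sum_congr rfl fun j _ => by rw [huv]; congr 2; ring
  have hcol (j : Fin (n / 2)) : ∑ i, c₀ s(.inl i, .inr j) = 0 := by
    rw [← sum_ite_odd_add_eq_zero even_half (j + 2)]
    exact sum_congr rfl fun i _ => by rw [huv]; congr 2; ring
  have half_sub_one : ((n : ℤ) - 2) / 2 = ((Fintype.card (Fin (n / 2)) - 1 : ℕ) : ℤ) := by
    rw [Fintype.card_fin]
    omega
  rw [half_sub_one]
  exact star_imbalance_construction_general rfl c₀ hu hv hrow hcol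
end
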